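/- Let N ≥ 1, let Ω ⊂ ℝ^N be a bounded open set with smooth boundary, let 1 < p ≤ θ, Λ > 0 and σ > 0, and let s > p + 1 satisfy L(s) < 0. Then there exists a finite constant C_s such that for every λ ∈ (Λ/2, Λ), with γ = σλ, and every pair (u, v) of functions in C²(Ω) ∩ C(closure Ω), positive in Ω and vanishing on ∂Ω, satisfying −Δu = λ(v+1)^p and −Δv = γ(u+1)^θ in Ω and stable, one has ∫_Ω (u+1)^{(θ−1)/2} (v+1)^{(p+2s−1)/2} dx + ∫_Ω (u+1)^{θ + (θ+1)(s−1)/(p+1)} dx ≤ C_s. -/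

import Mathlib

open MeasureTheory Metric Real Set

noncomputable section

/-- The Euclidean Laplacian `Δw(x) = ∑ i, ∂²w/∂xᵢ²(x)` on `ℝ^N`. -/
def lap {N : ℕ} (w : EuclideanSpace ℝ (Fin N) → ℝ) (x : EuclideanSpace ℝ (Fin N)) : ℝ :=
  ∑ i : Fin N,
    fderiv ℝ (fun y => fderiv ℝ w y (EuclideanSpace.single i 1)) x (EuclideanSpace.single i 1)

/-- `φ` is a smooth compactly supported test function with support inside `Ω`. -/
def IsTestFun {N : ℕ} (Ω : Set (EuclideanSpace ℝ (Fin N)))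
    (φ : EuclideanSpace ℝ (Fin N) → ℝ) : Prop :=
  ContDiff ℝ (⊤ : ℕ∞) φ ∧ HasCompactSupport φ ∧ tsupport φ ⊆ Ω

/-- Stability of a classical solution of `-Δu = λ(v+1)^p, -Δv = γ(u+1)^θ` in `Ω`:
`√(λγpθ) ∫_Ω (v+1)^((p-1)/2) (u+1)^((θ-1)/2) φ² ≤ ∫_Ω |∇φ|²` for all test functions. -/
def IsStable {N : ℕ} (Ω : Set (EuclideanSpace ℝ (Fin N))) (lam gam p θ : ℝ)
    (u v : EuclideanSpace ℝ (Fin N) → ℝ) : Prop :=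
  ∀ φ : EuclideanSpace ℝ (Fin N) → ℝ, IsTestFun Ω φ →
    Real.sqrt (lam * gam * p * θ) *
        ∫ x in Ω, (v x + 1) ^ ((p - 1) / 2) * (u x + 1) ^ ((θ - 1) / 2) * φ x ^ 2
      ≤ ∫ x in Ω, ‖gradient φ x‖ ^ 2

/-- `Ω` has smooth boundary: near each boundary point, `Ω` is the sublevel set of a
smooth defining function with nonvanishing differential. -/
def HasSmoothBoundary {N : ℕ} (Ω : Set (EuclideanSpace ℝ (Fin N))) : Prop :=
  ∀ x ∈ frontier Ω, ∃ (U : Set (EuclideanSpace ℝ (Fin N)))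
    (f : EuclideanSpace ℝ (Fin N) → ℝ), IsOpen U ∧ x ∈ U ∧ ContDiff ℝ (⊤ : ℕ∞) f ∧
    (∀ y ∈ U, fderiv ℝ f y ≠ 0) ∧ (∀ y ∈ U, y ∈ Ω ↔ f y < 0)

/-- The quartic polynomial `L`. -/
def Lpoly (p θ s : ℝ) : ℝ :=
  s ^ 4 - (16 * p * θ * (p + 1) / (θ + 1)) * s ^ 2
    + (16 * p * θ * (p + 1) * (p + θ + 2) / (θ + 1) ^ 2) * s
    - 16 * p * θ * (p + 1) ^ 2 / (θ + 1) ^ 2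

/-- The quartic polynomial `H`. -/
def Hpoly (p θ x : ℝ) : ℝ :=
  x ^ 4 - (16 * p * θ * (p + 1) * (θ + 1) / (p * θ - 1) ^ 2) * x ^ 2
    + (16 * p * θ * (p + 1) * (θ + 1) * (p + θ + 2) / (p * θ - 1) ^ 3) * x
    - 16 * p * θ * (p + 1) ^ 2 * (θ + 1) ^ 2 / (p * θ - 1) ^ 4


open Filter Topology

lemma aux_second_deriv_nonpos {N : ℕ} {f : EuclideanSpace ℝ (Fin N) → ℝ}
    {x₀ e : EuclideanSpace ℝ (Fin N)} (hf : ContDiffAt ℝ 2 f x₀) (hm : IsLocalMax f x₀) :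
    fderiv ℝ (fun y => fderiv ℝ f y e) x₀ e ≤ 0 := by
  have hline : ∀ t : ℝ, HasDerivAt (fun t : ℝ => x₀ + t • e) e t := by
    intro t
    simpa using ((hasDerivAt_id t).smul_const e).const_add x₀
  have hcont : ContinuousAt (fun t : ℝ => x₀ + t • e) 0 := (hline 0).continuousAt
  have hx0 : x₀ + (0 : ℝ) • e = x₀ := by simp
  have htend : Tendsto (fun t : ℝ => x₀ + t • e) (𝓝 0) (𝓝 x₀) := by
    have := hcont.tendsto
    rwa [hx0] at this
  have hdiff : ∀ᶠ y in 𝓝 x₀, DifferentiableAt ℝ f y := by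
    have := hf.eventually (by simp)
    filter_upwards [this] with y hy
    exact hy.differentiableAt (by norm_num)
  have hF : DifferentiableAt ℝ (fun y => fderiv ℝ f y e) x₀ := by
    have h1 : ContDiffAt ℝ 1 (fderiv ℝ f) x₀ := hf.fderiv_right (by norm_num)
    have h2 := h1.differentiableAt (by norm_num)
    exact h2.clm_apply (differentiableAt_const e)
  set ψ : ℝ → ℝ := fun t => f (x₀ + t • e) with hψ
  have hd : ∀ᶠ t in 𝓝 (0 : ℝ), HasDerivAt ψ (fderiv ℝ f (x₀ + t • e) e) t := by
    filter_upwards [htend.eventually hdiff] with t ht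
    exact ht.hasFDerivAt.comp_hasDerivAt t (hline t)
  have hde : deriv ψ =ᶠ[𝓝 0] fun t => fderiv ℝ f (x₀ + t • e) e := by
    filter_upwards [hd] with t ht using ht.deriv
  have hdd : HasDerivAt (deriv ψ) (fderiv ℝ (fun y => fderiv ℝ f y e) x₀ e) 0 := by
    have h1 : HasDerivAt (fun t : ℝ => fderiv ℝ f (x₀ + t • e) e)
        (fderiv ℝ (fun y => fderiv ℝ f y e) x₀ e) 0 := by
      have hF' : HasFDerivAt (fun y => fderiv ℝ f y e)
          (fderiv ℝ (fun y => fderiv ℝ f y e) x₀) (x₀ + (0 : ℝ) • e) := by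
        rw [hx0]; exact hF.hasFDerivAt
      exact hF'.comp_hasDerivAt (0 : ℝ) (hline 0)
    exact h1.congr_of_eventuallyEq hde
  have hlm : IsLocalMax ψ 0 := by
    have : ∀ᶠ y in 𝓝 x₀, f y ≤ f x₀ := hm
    have h2 := htend.eventually this
    filter_upwards [h2] with t ht
    simpa [hψ] using ht
  by_contra hcon
  push Not at hcon
  have hmin : IsLocalMin ψ 0 :=
    isLocalMin_of_deriv_deriv_pos (by rw [hdd.deriv]; exact hcon) hlm.deriv_eq_zero
      (hd.self_of_nhds.continuousAt)
  have hconst : ψ =ᶠ[𝓝 0] fun _ => ψ 0 := by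
    filter_upwards [hmin, hlm] with t h1 h2
    exact le_antisymm h2 h1
  have hz : deriv ψ =ᶠ[𝓝 0] fun _ => 0 := by
    have := hconst.deriv
    simpa using this
  have := hz.deriv_eq
  rw [hdd.deriv] at this
  simp at this
  linarith

lemma aux_lap_comb {N : ℕ} {u v : EuclideanSpace ℝ (Fin N) → ℝ}
    {x₀ : EuclideanSpace ℝ (Fin N)} (hu : ContDiffAt ℝ 2 u x₀) (hv : ContDiffAt ℝ 2 v x₀)
    (k : ℝ) (hm : IsLocalMax (fun x => k * u x - v x) x₀) :
    k * lap u x₀ - lap v x₀ ≤ 0 := by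
  have hd : ∀ {w : EuclideanSpace ℝ (Fin N) → ℝ}, ContDiffAt ℝ 2 w x₀ →
      ∀ᶠ y in 𝓝 x₀, DifferentiableAt ℝ w y := by
    intro w hf
    have := hf.eventually (by simp)
    filter_upwards [this] with y hy
    exact hy.differentiableAt (by norm_num)
  have hF : ∀ {w : EuclideanSpace ℝ (Fin N) → ℝ}, ContDiffAt ℝ 2 w x₀ → ∀ e,
      DifferentiableAt ℝ (fun y => fderiv ℝ w y e) x₀ := by
    intro w hf e
    have h1 : ContDiffAt ℝ 1 (fderiv ℝ w) x₀ := hf.fderiv_right (by norm_num)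
    have h2 := h1.differentiableAt (by norm_num)
    exact h2.clm_apply (differentiableAt_const e)
  unfold lap
  rw [Finset.mul_sum, ← Finset.sum_sub_distrib]
  apply Finset.sum_nonpos
  intro i _
  set e : EuclideanSpace ℝ (Fin N) := EuclideanSpace.single i 1
  have hC : ContDiffAt ℝ 2 (fun x => k * u x - v x) x₀ := (contDiffAt_const.mul hu).sub hv
  have h := aux_second_deriv_nonpos (e := e) hC hm
  have heq : (fun y => fderiv ℝ (fun x => k * u x - v x) y e) =ᶠ[𝓝 x₀]
      fun y => k * fderiv ℝ u y e - fderiv ℝ v y e := by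
    filter_upwards [hd hu, hd hv] with y h1 h2
    have h3 : HasFDerivAt (fun x => k * u x - v x) (k • fderiv ℝ u y - fderiv ℝ v y) y :=
      (h1.hasFDerivAt.const_mul k).sub h2.hasFDerivAt
    rw [h3.fderiv]
    simp
  rw [heq.fderiv_eq] at h
  have h3 : HasFDerivAt (fun y => k * fderiv ℝ u y e - fderiv ℝ v y e)
      (k • fderiv ℝ (fun y => fderiv ℝ u y e) x₀ - fderiv ℝ (fun y => fderiv ℝ v y e) x₀) x₀ :=
    ((hF hu e).hasFDerivAt.const_mul k).sub (hF hv e).hasFDerivAt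
  rw [h3.fderiv] at h
  simpa using h

/-- Tangent line inequality for `t ↦ t ^ α`. -/
lemma aux_tangent {a b α : ℝ} (ha : 0 < a) (hb : 0 < b) (hα : 1 ≤ α) :
    a ^ α + α * a ^ (α - 1) * (b - a) ≤ b ^ α := by
  have h := one_add_mul_self_le_rpow_one_add (s := b / a - 1)
    (by have : 0 < b / a := by positivity
        linarith) hα
  have h1 : 1 + (b / a - 1) = b / a := by ring
  rw [h1, Real.div_rpow hb.le ha.le, le_div_iff₀ (by positivity)] at h
  have h2 : a ^ α = a ^ (α - 1) * a := by
    rw [← Real.rpow_add_one ha.ne']; ring_nf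
  calc _ = (1 + α * (b / a - 1)) * a ^ α := by
        rw [h2]; field_simp
    _ ≤ _ := h

/-- Comparison: `c (u+1)^α ≤ v + 1 + K`. -/
lemma aux_comparison {N : ℕ} {Ω : Set (EuclideanSpace ℝ (Fin N))}
    (hΩo : IsOpen Ω) (hΩb : Bornology.IsBounded Ω) {p θ σ lam c : ℝ} (hp : 1 < p)
    (hpθ : p ≤ θ) (hlam : 0 < lam) (hc : 0 < c)
    (hcσ : c ^ (p + 1) * ((θ + 1) / (p + 1)) = σ)
    {u v : EuclideanSpace ℝ (Fin N) → ℝ}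
    (hu : ContDiffOn ℝ 2 u Ω) (hv : ContDiffOn ℝ 2 v Ω)
    (huc : ContinuousOn u (closure Ω)) (hvc : ContinuousOn v (closure Ω))
    (hu0 : ∀ x ∈ closure Ω, 0 ≤ u x) (hv0 : ∀ x ∈ closure Ω, 0 ≤ v x)
    (hub : ∀ x ∈ frontier Ω, u x = 0) (hvb : ∀ x ∈ frontier Ω, v x = 0)
    (hule : ∀ x ∈ Ω, -lap u x = lam * (v x + 1) ^ p)
    (hvle : ∀ x ∈ Ω, -lap v x = σ * lam * (u x + 1) ^ θ) :
    ∀ x ∈ Ω, c * (u x + 1) ^ ((θ + 1) / (p + 1)) ≤ v x + 1 + c := by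
  set α := (θ + 1) / (p + 1) with hαdef
  have hα : 1 ≤ α := by rw [hαdef, le_div_iff₀ (by linarith)]; linarith
  intro x hx
  by_contra hcon
  push Not at hcon
  have hK : IsCompact (closure Ω) := hΩb.isCompact_closure
  have hwc : ContinuousOn (fun x => c * (u x + 1) ^ α - (v x + 1)) (closure Ω) := by
    apply ContinuousOn.sub
    · apply continuousOn_const.mul
      apply (huc.add continuousOn_const).rpow_const
      intro y hy
      exact Or.inr (by linarith)
    · exact hvc.add continuousOn_const
  obtain ⟨x₀, hx₀, hmax⟩ := hK.exists_isMaxOn ⟨x, subset_closure hx⟩ hwc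
  have hgt : c < c * (u x₀ + 1) ^ α - (v x₀ + 1) := by
    have := hmax (subset_closure hx)
    simp only [Set.mem_ofPred_eq] at this
    linarith
  have hx₀Ω : x₀ ∈ Ω := by
    by_contra hn
    have hfr : x₀ ∈ frontier Ω := by
      rw [hΩo.frontier_eq]; exact ⟨hx₀, hn⟩
    rw [hub _ hfr, hvb _ hfr] at hgt
    simp at hgt
    linarith
  have hU : 0 < u x₀ + 1 := by linarith [hu0 x₀ hx₀]
  have hV : 0 < v x₀ + 1 := by linarith [hv0 x₀ hx₀]
  set k := c * (α * (u x₀ + 1) ^ (α - 1)) with hk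
  have hkpos : 0 < k := by positivity
  have hnhds : Ω ∈ 𝓝 x₀ := hΩo.mem_nhds hx₀Ω
  have hlm : IsLocalMax (fun x => k * u x - v x) x₀ := by
    filter_upwards [hnhds] with y hy
    have h1 := hmax (subset_closure hy)
    simp only [Set.mem_ofPred_eq] at h1
    have h2 := aux_tangent (a := u x₀ + 1) (b := u y + 1) hU
      (by linarith [hu0 y (subset_closure hy)]) hα
    have h3 := mul_le_mul_of_nonneg_left h2 hc.le
    have h4 : c * ((u x₀ + 1) ^ α + α * (u x₀ + 1) ^ (α - 1) * (u y + 1 - (u x₀ + 1)))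
       = c * (u x₀ + 1) ^ α + k * (u y - u x₀) := by rw [hk]; ring
    rw [h4] at h3
    nlinarith
  have hlap := aux_lap_comb (hu.contDiffAt hnhds) (hv.contDiffAt hnhds) k hlm
  have e1 := hule x₀ hx₀Ω
  have e2 := hvle x₀ hx₀Ω
  -- strict inequality
  have hVlt : v x₀ + 1 < c * (u x₀ + 1) ^ α := by linarith
  have hpow : (v x₀ + 1) ^ p < (c * (u x₀ + 1) ^ α) ^ p :=
    Real.rpow_lt_rpow hV.le hVlt (by linarith)
  have hexp : k * (c * (u x₀ + 1) ^ α) ^ p = σ * (u x₀ + 1) ^ θ := by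
    rw [Real.mul_rpow hc.le (by positivity), ← Real.rpow_mul hU.le, ← hcσ,
      Real.rpow_add_one hc.ne', hk]
    have : (u x₀ + 1) ^ θ = (u x₀ + 1) ^ (α - 1) * (u x₀ + 1) ^ (α * p) := by
      rw [← Real.rpow_add hU]
      congr 1
      rw [hαdef]; field_simp; ring
    rw [this]; ring
  have h5 : k * (v x₀ + 1) ^ p < σ * (u x₀ + 1) ^ θ := by
    rw [← hexp]; exact mul_lt_mul_of_pos_left hpow hkpos
  have h6 := mul_lt_mul_of_pos_left h5 hlam
  have h7 : lap u x₀ = -(lam * (v x₀ + 1) ^ p) := by linarith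
  have h8 : lap v x₀ = -(σ * lam * (u x₀ + 1) ^ θ) := by linarith
  rw [h7, h8] at hlap
  nlinarith

/-- Extension by zero of a function vanishing near the boundary. -/
lemma aux_indicator {N : ℕ} {Ω : Set (EuclideanSpace ℝ (Fin N))}
    (hΩo : IsOpen Ω) (hΩb : Bornology.IsBounded Ω)
    {v : EuclideanSpace ℝ (Fin N) → ℝ} (hvc : ContinuousOn v (closure Ω))
    (hvb : ∀ x ∈ frontier Ω, v x = 0) {h : EuclideanSpace ℝ (Fin N) → ℝ}
    (hh : ContDiffOn ℝ 1 h Ω) (hz : ∀ x ∈ Ω, v x ≤ 1 → h x = 0) :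
    ContDiff ℝ 1 (Ω.indicator h) ∧ HasCompactSupport (Ω.indicator h) ∧
      tsupport (Ω.indicator h) ⊆ Ω := by
  set K : Set (EuclideanSpace ℝ (Fin N)) := closure Ω ∩ v ⁻¹' (Set.Ici 1) with hK
  have hKcl : IsClosed K := hvc.preimage_isClosed_of_isClosed isClosed_closure isClosed_Ici
  have hKc : IsCompact K := hΩb.isCompact_closure.of_isClosed_subset hKcl Set.inter_subset_left
  have hKΩ : K ⊆ Ω := by
    intro x hx
    by_contra hn
    have hfr : x ∈ frontier Ω := by
      rw [hΩo.frontier_eq]; exact ⟨hx.1, hn⟩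
    have h1 : (1 : ℝ) ≤ v x := hx.2
    rw [hvb x hfr] at h1
    norm_num at h1
  have hzero : ∀ x ∉ K, Ω.indicator h x = 0 := by
    intro x hx
    by_cases hxΩ : x ∈ Ω
    · rw [Set.indicator_of_mem hxΩ]
      apply hz x hxΩ
      by_contra hn
      push Not at hn
      exact hx ⟨subset_closure hxΩ, hn.le⟩
    · exact Set.indicator_of_notMem hxΩ _
  have hts : tsupport (Ω.indicator h) ⊆ K := by
    apply closure_minimal _ hKcl
    intro x hx
    by_contra hn
    exact hx (hzero x hn)
  refine ⟨?_, HasCompactSupport.of_support_subset_isCompact hKc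
    ((subset_tsupport _).trans hts), hts.trans hKΩ⟩
  rw [contDiff_iff_contDiffAt]
  intro x
  by_cases hxΩ : x ∈ Ω
  · have hn : Ω ∈ 𝓝 x := hΩo.mem_nhds hxΩ
    refine (hh.contDiffAt hn).congr_of_eventuallyEq ?_
    filter_upwards [hn] with y hy
    exact Set.indicator_of_mem hy _
  · have hn : Kᶜ ∈ 𝓝 x := hKcl.isOpen_compl.mem_nhds (fun hx => hxΩ (hKΩ hx))
    refine (contDiffAt_const (c := (0 : ℝ))).congr_of_eventuallyEq ?_
    filter_upwards [hn] with y hy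
    exact hzero y hy

lemma aux_integral_fderiv {N : ℕ} {F : EuclideanSpace ℝ (Fin N) → ℝ}
    (hF : ContDiff ℝ 1 F) (hc : HasCompactSupport F) (e : EuclideanSpace ℝ (Fin N)) :
    ∫ x, fderiv ℝ F x e = 0 := by
  have hcont : Continuous (fun x => fderiv ℝ F x e) :=
    (hF.continuous_fderiv (by norm_num)).clm_apply continuous_const
  have hcs : HasCompactSupport (fun x => fderiv ℝ F x e) := hc.fderiv_apply ℝ e
  have hi := hcont.integrable_of_hasCompactSupport (μ := volume) hcs
  have := integral_mul_fderiv_eq_neg_fderiv_mul_of_integrable (μ := (volume : Measure (EuclideanSpace ℝ (Fin N))))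
    (f := fun _ => (1 : ℝ)) (g := F) (v := e) (by simp) (by simpa using hi)
    (by simpa using hF.continuous.integrable_of_hasCompactSupport hc)
    (fun x _ => differentiableAt_const _)
    (fun x _ => hF.differentiable (by norm_num) x)
  simpa using this

lemma aux_norm_gradient {N : ℕ} (φ : EuclideanSpace ℝ (Fin N) → ℝ)
    (x : EuclideanSpace ℝ (Fin N)) : ‖gradient φ x‖ = ‖fderiv ℝ φ x‖ := by
  unfold gradient
  exact LinearIsometryEquiv.norm_map _ _

lemma aux_norm_gradient_sq {N : ℕ} (φ : EuclideanSpace ℝ (Fin N) → ℝ)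
    (x : EuclideanSpace ℝ (Fin N)) :
    ‖gradient φ x‖ ^ 2 = ∑ i, (fderiv ℝ φ x (EuclideanSpace.single i 1)) ^ 2 := by
  rw [EuclideanSpace.norm_sq_eq]
  apply Finset.sum_congr rfl
  intro i _
  have h : inner ℝ (gradient φ x) (EuclideanSpace.single i (1 : ℝ)) =
      fderiv ℝ φ x (EuclideanSpace.single i 1) := by
    unfold gradient
    exact InnerProductSpace.toDual_symm_apply
  rw [← h, EuclideanSpace.inner_single_right]
  simp

/-- Stability extends to `C¹` compactly supported test functions. -/
lemma aux_stable_C1 {N : ℕ} {Ω : Set (EuclideanSpace ℝ (Fin N))} (hΩo : IsOpen Ω)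
    (hΩb : Bornology.IsBounded Ω) {lam gam p θ : ℝ}
    {u v : EuclideanSpace ℝ (Fin N) → ℝ} (hst : IsStable Ω lam gam p θ u v)
    (hW : IntegrableOn (fun x => (v x + 1) ^ ((p - 1) / 2) * (u x + 1) ^ ((θ - 1) / 2)) Ω)
    {φ : EuclideanSpace ℝ (Fin N) → ℝ} (hφ : ContDiff ℝ 1 φ) (hc : HasCompactSupport φ)
    (hs : tsupport φ ⊆ Ω) :
    Real.sqrt (lam * gam * p * θ) *
        ∫ x in Ω, (v x + 1) ^ ((p - 1) / 2) * (u x + 1) ^ ((θ - 1) / 2) * φ x ^ 2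
      ≤ ∫ x in Ω, ‖gradient φ x‖ ^ 2 := by
  obtain ⟨δ, hδ, hδΩ⟩ := hc.isCompact.exists_cthickening_subset_open hΩo hs
  let b : ℕ → ContDiffBump (0 : EuclideanSpace ℝ (Fin N)) := fun n =>
    ⟨δ / 2 / (n + 1) / 2, δ / 2 / (n + 1), by positivity, by
      have : 0 < δ / 2 / ((n : ℝ) + 1) := by positivity
      linarith⟩
  have hb : ∀ n, (b n).rOut = δ / 2 / ((n : ℝ) + 1) := fun n => rfl
  have hbt : Tendsto (fun n => (b n).rOut) atTop (𝓝 0) := by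
    have h1 := (tendsto_one_div_add_atTop_nhds_zero_nat (𝕜 := ℝ)).const_mul (δ / 2)
    rw [mul_zero] at h1
    refine h1.congr ?_
    intro n
    rw [hb]; ring
  let L : ℝ →L[ℝ] ℝ →L[ℝ] ℝ := ContinuousLinearMap.lsmul ℝ ℝ
  let ψ : ℕ → EuclideanSpace ℝ (Fin N) → ℝ := fun n =>
    MeasureTheory.convolution ((b n).normed volume) φ L volume
  have hdφ : Continuous (fderiv ℝ φ) := hφ.continuous_fderiv (by norm_num)
  have hder : ∀ n x, fderiv ℝ (ψ n) x = MeasureTheory.convolution ((b n).normed volume)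
      (fderiv ℝ φ) (ContinuousLinearMap.lsmul ℝ ℝ) volume x := by
    intro n x
    have h1 := HasCompactSupport.hasFDerivAt_convolution_right (μ := volume) L hc
      (((b n).continuous_normed (μ := volume)).locallyIntegrable) hφ x
    rw [h1.fderiv]
    unfold MeasureTheory.convolution
    congr 1
  have htest : ∀ n, IsTestFun Ω (ψ n) := by
    intro n
    have hsupp : Function.support (ψ n) ⊆ Metric.cthickening (δ / 2) (tsupport φ) := by
      intro x hx
      have := MeasureTheory.support_convolution_subset L hx
      obtain ⟨y, hy, z, hz, rfl⟩ := this
      rw [(b n).support_normed_eq] at hy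
      apply Metric.mem_cthickening_of_dist_le (y + z) z _ _ (subset_tsupport _ hz)
      rw [dist_eq_norm]
      have h2 : ‖y‖ < (b n).rOut := by simpa using hy
      have h3 : (b n).rOut ≤ δ / 2 := by
        rw [hb]
        apply div_le_self (by positivity)
        linarith [(Nat.cast_nonneg n : (0 : ℝ) ≤ n)]
      simp only [add_sub_cancel_right]
      linarith
    have hcl : IsClosed (Metric.cthickening (δ / 2) (tsupport φ)) := Metric.isClosed_cthickening
    have hcpt : IsCompact (Metric.cthickening (δ / 2) (tsupport φ)) := hc.isCompact.cthickening
    refine ⟨?_, HasCompactSupport.of_support_subset_isCompact hcpt hsupp, ?_⟩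
    · exact HasCompactSupport.contDiff_convolution_left L (b n).hasCompactSupport_normed
        (b n).contDiff_normed hφ.continuous.locallyIntegrable
    · exact ((closure_minimal hsupp hcl).trans
        (Metric.cthickening_mono (by linarith) _)).trans hδΩ
  obtain ⟨M, hM⟩ := hφ.continuous.bounded_above_of_compact_support hc
  obtain ⟨M', hM'⟩ := hdφ.bounded_above_of_compact_support (hc.fderiv ℝ)
  have hlim1 : ∀ x, Tendsto (fun n => ψ n x) atTop (𝓝 (φ x)) := fun x =>
    ContDiffBump.convolution_tendsto_right_of_continuous hbt hφ.continuous x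
  have hlim2 : ∀ x, Tendsto (fun n => fderiv ℝ (ψ n) x) atTop (𝓝 (fderiv ℝ φ x)) := by
    intro x
    simp_rw [hder]
    exact ContDiffBump.convolution_tendsto_right_of_continuous hbt hdφ x
  have hbd1 : ∀ n x, ‖ψ n x‖ ≤ 3 * M := by
    intro n x
    have h1 : dist (ψ n x) (φ x) ≤ 2 * M :=
      ContDiffBump.dist_normed_convolution_le hφ.continuous.aestronglyMeasurable
        (fun y _ => by
          rw [dist_eq_norm]
          linarith [norm_sub_le (φ y) (φ x), hM x, hM y])
    rw [dist_eq_norm] at h1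
    have h2 := norm_add_le (ψ n x - φ x) (φ x)
    rw [sub_add_cancel] at h2
    linarith [hM x]
  have hbd2 : ∀ n x, ‖fderiv ℝ (ψ n) x‖ ≤ 3 * M' := by
    intro n x
    have h1 : dist (fderiv ℝ (ψ n) x) (fderiv ℝ φ x) ≤ 2 * M' := by
      rw [hder]
      exact ContDiffBump.dist_normed_convolution_le hdφ.aestronglyMeasurable
        (fun y _ => by
          rw [dist_eq_norm]
          linarith [norm_sub_le (fderiv ℝ φ y) (fderiv ℝ φ x), hM' x, hM' y])
    rw [dist_eq_norm] at h1
    have h2 := norm_add_le (fderiv ℝ (ψ n) x - fderiv ℝ φ x) (fderiv ℝ φ x)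
    rw [sub_add_cancel] at h2
    linarith [hM' x]
  have hfin : volume Ω < ⊤ := hΩb.measure_lt_top
  have hψc : ∀ n, Continuous (ψ n) := fun n => (htest n).1.continuous
  have T1 : Tendsto (fun n => ∫ x in Ω, (v x + 1) ^ ((p - 1) / 2) *
      (u x + 1) ^ ((θ - 1) / 2) * ψ n x ^ 2) atTop
      (𝓝 (∫ x in Ω, (v x + 1) ^ ((p - 1) / 2) * (u x + 1) ^ ((θ - 1) / 2) * φ x ^ 2)) := by
    apply tendsto_integral_of_dominated_convergence
      (fun x => ‖(v x + 1) ^ ((p - 1) / 2) * (u x + 1) ^ ((θ - 1) / 2)‖ * (3 * M) ^ 2)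
    · intro n
      exact hW.aestronglyMeasurable.mul ((hψc n).pow 2).aestronglyMeasurable
    · exact hW.norm.mul_const _
    · intro n
      refine Eventually.of_forall fun x => ?_
      rw [norm_mul, norm_pow]
      gcongr
      exact hbd1 n x
    · refine Eventually.of_forall fun x => ?_
      exact ((hlim1 x).pow 2).const_mul _
  have T2 : Tendsto (fun n => ∫ x in Ω, ‖gradient (ψ n) x‖ ^ 2) atTop
      (𝓝 (∫ x in Ω, ‖gradient φ x‖ ^ 2)) := by
    simp_rw [aux_norm_gradient]
    apply tendsto_integral_of_dominated_convergence (fun x => (3 * M') ^ 2)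
    · intro n
      have : Continuous (fderiv ℝ (ψ n)) := (htest n).1.continuous_fderiv (by simp)
      exact (this.norm.pow 2).aestronglyMeasurable
    · exact integrableOn_const hfin.ne
    · intro n
      refine Eventually.of_forall fun x => ?_
      rw [norm_pow, norm_norm]
      gcongr
      exact hbd2 n x
    · refine Eventually.of_forall fun x => ?_
      exact (hlim2 x).norm.pow 2
  exact le_of_tendsto_of_tendsto' (T1.const_mul _) T2 (fun n => hst (ψ n) (htest n))

/-- Testing stability with `G(v+1)`, with g the derivative of G and g² that of H. -/
lemma aux_energy {N : ℕ} {Ω : Set (EuclideanSpace ℝ (Fin N))} (hΩo : IsOpen Ω)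
    (hΩb : Bornology.IsBounded Ω)
    {v : EuclideanSpace ℝ (Fin N) → ℝ} (hv : ContDiffOn ℝ 2 v Ω)
    (hvc : ContinuousOn v (closure Ω)) (hvb : ∀ x ∈ frontier Ω, v x = 0)
    {G H g : ℝ → ℝ} (hg : Continuous g) (hG : ∀ t, HasDerivAt G (g t) t)
    (hH : ∀ t, HasDerivAt H (g t ^ 2) t) (hG0 : ∀ t ≤ 2, G t = 0) (hH0 : ∀ t ≤ 2, H t = 0) :
    ContDiff ℝ 1 (Ω.indicator fun x => G (v x + 1)) ∧
    HasCompactSupport (Ω.indicator fun x => G (v x + 1)) ∧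
    tsupport (Ω.indicator fun x => G (v x + 1)) ⊆ Ω ∧
    ∫ x in Ω, ‖gradient (Ω.indicator fun x => G (v x + 1)) x‖ ^ 2 =
      ∫ x in Ω, H (v x + 1) * (-lap v x) := by
  have hGc : ContDiff ℝ 1 G := by
    rw [contDiff_one_iff_deriv]
    refine ⟨fun t => (hG t).differentiableAt, ?_⟩
    rw [show deriv G = g from funext fun t => (hG t).deriv]
    exact hg
  have hHc : ContDiff ℝ 1 H := by
    rw [contDiff_one_iff_deriv]
    refine ⟨fun t => (hH t).differentiableAt, ?_⟩
    rw [show deriv H = fun t => g t ^ 2 from funext fun t => (hH t).deriv]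
    exact hg.pow 2
  have hv1 : ContDiffOn ℝ 1 (fun x => v x + 1) Ω :=
    (hv.of_le (by norm_num)).add contDiffOn_const
  have hGv : ContDiffOn ℝ 1 (fun x => G (v x + 1)) Ω := hGc.comp_contDiffOn hv1
  have hHv : ContDiffOn ℝ 1 (fun x => H (v x + 1)) Ω := hHc.comp_contDiffOn hv1
  obtain ⟨a1, a2, a3⟩ := aux_indicator hΩo hΩb hvc hvb hGv
    (fun x _ hx => hG0 _ (by linarith))
  refine ⟨a1, a2, a3, ?_⟩
  have hdv : ContDiffOn ℝ 1 (fderiv ℝ v) Ω := hv.fderiv_of_isOpen hΩo (by norm_num)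
  let e : Fin N → EuclideanSpace ℝ (Fin N) := fun i => EuclideanSpace.single i 1
  have hpd : ∀ i, ContDiffOn ℝ 1 (fun x => fderiv ℝ v x (e i)) Ω := fun i =>
    hdv.clm_apply contDiffOn_const
  have hFi : ∀ i, ContDiffOn ℝ 1 (fun x => H (v x + 1) * fderiv ℝ v x (e i)) Ω := fun i =>
    hHv.mul (hpd i)
  let F : Fin N → EuclideanSpace ℝ (Fin N) → ℝ := fun i =>
    Ω.indicator (fun x => H (v x + 1) * fderiv ℝ v x (e i))
  have hF : ∀ i, ContDiff ℝ 1 (F i) ∧ HasCompactSupport (F i) ∧ tsupport (F i) ⊆ Ω := fun i =>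
    aux_indicator hΩo hΩb hvc hvb (hFi i) (fun x _ hx => by
      rw [hH0 _ (by linarith), zero_mul])
  have hFint : ∀ i, ∫ x in Ω, fderiv ℝ (F i) x (e i) = 0 := by
    intro i
    rw [setIntegral_eq_integral_of_forall_compl_eq_zero, aux_integral_fderiv (hF i).1 (hF i).2.1]
    intro x hx
    have : x ∉ tsupport (F i) := fun h => hx ((hF i).2.2 h)
    have h2 : fderiv ℝ (F i) x = 0 := by
      by_contra hne
      exact this (support_fderiv_subset ℝ hne)
    rw [h2]; rfl
  have hFintg : ∀ i, IntegrableOn (fun x => fderiv ℝ (F i) x (e i)) Ω := by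
    intro i
    have hcont : Continuous (fun x => fderiv ℝ (F i) x (e i)) :=
      ((hF i).1.continuous_fderiv (by norm_num)).clm_apply continuous_const
    exact (hcont.integrable_of_hasCompactSupport ((hF i).2.1.fderiv_apply ℝ (e i))).integrableOn
  have hsum : ∫ x in Ω, ∑ i, fderiv ℝ (F i) x (e i) = 0 := by
    rw [integral_finsetSum _ (fun i _ => hFintg i)]
    exact Finset.sum_eq_zero fun i _ => hFint i
  have hvd : ∀ x ∈ Ω, HasFDerivAt (fun y => v y + 1) (fderiv ℝ v x) x := by
    intro x hx
    have h1 : DifferentiableAt ℝ v x :=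
      (hv.contDiffAt (hΩo.mem_nhds hx)).differentiableAt (by norm_num)
    exact h1.hasFDerivAt.add_const 1
  have hgrad : ∀ x ∈ Ω, ‖gradient (Ω.indicator fun x => G (v x + 1)) x‖ ^ 2 =
      g (v x + 1) ^ 2 * ∑ i, (fderiv ℝ v x (e i)) ^ 2 := by
    intro x hx
    rw [aux_norm_gradient_sq, Finset.mul_sum]
    apply Finset.sum_congr rfl
    intro i _
    have h1 : HasFDerivAt (fun y => G (v y + 1)) (g (v x + 1) • fderiv ℝ v x) x :=
      (hG (v x + 1)).comp_hasFDerivAt x (hvd x hx)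
    have h2 : (Ω.indicator fun x => G (v x + 1)) =ᶠ[𝓝 x] fun y => G (v y + 1) := by
      filter_upwards [hΩo.mem_nhds hx] with y hy
      exact Set.indicator_of_mem hy _
    rw [h2.fderiv_eq, h1.fderiv]
    simp only [smul_apply, smul_eq_mul, mul_pow]
    rfl
  have hdiv : ∀ x ∈ Ω, ∑ i, fderiv ℝ (F i) x (e i) =
      g (v x + 1) ^ 2 * ∑ i, (fderiv ℝ v x (e i)) ^ 2 + H (v x + 1) * lap v x := by
    intro x hx
    unfold lap
    rw [Finset.mul_sum, Finset.mul_sum, ← Finset.sum_add_distrib]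
    apply Finset.sum_congr rfl
    intro i _
    have h1 : HasFDerivAt (fun y => H (v y + 1)) (g (v x + 1) ^ 2 • fderiv ℝ v x) x :=
      (hH (v x + 1)).comp_hasFDerivAt x (hvd x hx)
    have h3 : DifferentiableAt ℝ (fun y => fderiv ℝ v y (e i)) x :=
      ((hpd i).contDiffAt (hΩo.mem_nhds hx)).differentiableAt (by norm_num)
    have h2 : F i =ᶠ[𝓝 x] fun y => H (v y + 1) * fderiv ℝ v y (e i) := by
      filter_upwards [hΩo.mem_nhds hx] with y hy
      exact Set.indicator_of_mem hy _
    have h4 : fderiv ℝ (fun y => H (v y + 1) * fderiv ℝ v y (e i)) x = _ :=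
      (h1.mul h3.hasFDerivAt).fderiv
    rw [h2.fderiv_eq, h4]
    simp only [smul_apply, smul_eq_mul, add_apply]
    change _ = _ + H (v x + 1) * fderiv ℝ (fun y => fderiv ℝ v y (e i)) x (e i)
    ring
  have hm : MeasurableSet Ω := hΩo.measurableSet
  have hgi : IntegrableOn (fun x => ‖gradient (Ω.indicator fun x => G (v x + 1)) x‖ ^ 2) Ω := by
    simp_rw [aux_norm_gradient]
    have hcont : Continuous (fderiv ℝ (Ω.indicator fun x => G (v x + 1))) :=
      a1.continuous_fderiv (by norm_num)
    have hcs := (a2.fderiv ℝ).norm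
    have : HasCompactSupport
        (fun x => ‖fderiv ℝ (Ω.indicator fun x => G (v x + 1)) x‖ ^ 2) :=
      hcs.comp_left (g := fun t : ℝ => t ^ 2) (by simp)
    exact ((hcont.norm.pow 2).integrable_of_hasCompactSupport this).integrableOn
  have hkey : ∫ x in Ω, H (v x + 1) * (-lap v x) =
      ∫ x in Ω, (‖gradient (Ω.indicator fun x => G (v x + 1)) x‖ ^ 2
        - ∑ i, fderiv ℝ (F i) x (e i)) := by
    apply setIntegral_congr_fun hm
    intro x hx
    simp only
    rw [hgrad x hx, hdiv x hx]
    ring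
  rw [hkey, integral_sub hgi (integrable_finsetSum _ fun i _ => hFintg i), hsum, sub_zero]

lemma aux_cut {q : ℝ} (hq : 1 < q) : ∃ g G H : ℝ → ℝ, Continuous g ∧
    (∀ t, HasDerivAt G (g t) t) ∧ (∀ t, HasDerivAt H (g t ^ 2) t) ∧
    (∀ t ≤ 2, G t = 0) ∧ (∀ t ≤ 2, H t = 0) ∧
    (∀ t, 1 ≤ t → ∀ ε, 0 < ε → ε < 1 → (1 - ε) * t ^ (2 * q) - 3 ^ (2 * q) / ε ≤ G t ^ 2) ∧
    (∀ t, 1 ≤ t → H t ≤ q ^ 2 / (2 * q - 1) * t ^ (2 * q - 1)) := by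
  let χ : ℝ → ℝ := fun t => max 0 (min 1 (t - 2))
  let g : ℝ → ℝ := fun t => q * t ^ (q - 1) * χ t
  have hχc : Continuous χ := by fun_prop
  have hpc : Continuous (fun t : ℝ => t ^ (q - 1)) :=
    continuous_id.rpow_const (fun _ => Or.inr (by linarith))
  have hg : Continuous g := (continuous_const.mul hpc).mul hχc
  have hg2 : Continuous (fun t => g t ^ 2) := hg.pow 2
  have hχ0 : ∀ t ≤ 2, χ t = 0 := by
    intro t ht
    exact max_eq_left ((min_le_right _ _).trans (by linarith))
  have hχ1 : ∀ t, 3 ≤ t → χ t = 1 := by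
    intro t ht
    have : min 1 (t - 2) = 1 := min_eq_left (by linarith)
    simp only [χ, this]
    norm_num
  have hχn : ∀ t, 0 ≤ χ t := fun t => le_max_left _ _
  have hχl : ∀ t, χ t ≤ 1 := fun t => max_le (by norm_num) (min_le_left _ _)
  have hg0 : ∀ t ≤ 2, g t = 0 := fun t ht => by simp [g, hχ0 t ht]
  have hgn : ∀ t, 0 ≤ t → 0 ≤ g t := fun t ht => by
    have := hχn t
    have := Real.rpow_nonneg ht (q - 1)
    simp only [g]; positivity
  let G : ℝ → ℝ := fun t => ∫ x in (2:ℝ)..t, g x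
  let H : ℝ → ℝ := fun t => ∫ x in (2:ℝ)..t, g x ^ 2
  have hGn : ∀ t, 1 ≤ t → 0 ≤ G t := by
    intro t ht
    by_cases h : t ≤ 2
    · have : G t = 0 := by
        simp only [G]
        rw [intervalIntegral.integral_symm, intervalIntegral.integral_congr (g := fun _ => 0)]
        · simp
        · intro x hx
          rw [Set.uIcc_of_le h] at hx
          exact hg0 x hx.2
      exact this.ge
    · push Not at h
      apply intervalIntegral.integral_nonneg h.le
      intro x hx
      exact hgn x (by linarith [hx.1])
  have hG0 : ∀ t ≤ 2, G t = 0 := by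
    intro t h
    simp only [G]
    rw [intervalIntegral.integral_symm, intervalIntegral.integral_congr (g := fun _ => 0)]
    · simp
    · intro x hx
      rw [Set.uIcc_of_le h] at hx
      exact hg0 x hx.2
  have hH0 : ∀ t ≤ 2, H t = 0 := by
    intro t h
    simp only [H]
    rw [intervalIntegral.integral_symm, intervalIntegral.integral_congr (g := fun _ => 0)]
    · simp
    · intro x hx
      rw [Set.uIcc_of_le h] at hx
      simp only [hg0 x hx.2]
      norm_num
  refine ⟨g, G, H, hg, ?_, ?_, hG0, hH0, ?_, ?_⟩
  · intro t
    exact intervalIntegral.integral_hasDerivAt_right (hg.intervalIntegrable _ _)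
      (hg.stronglyMeasurableAtFilter _ _) hg.continuousAt
  · intro t
    exact intervalIntegral.integral_hasDerivAt_right (hg2.intervalIntegrable _ _)
      (hg2.stronglyMeasurableAtFilter _ _) hg2.continuousAt
  · intro t ht ε hε hε1
    have hGt : t ^ q - 3 ^ q ≤ G t := by
      by_cases h : t ≤ 3
      · have : t ^ q ≤ 3 ^ q := Real.rpow_le_rpow (by linarith) h (by linarith)
        linarith [hGn t ht]
      · push Not at h
        have h1 : G 3 + ∫ x in (3:ℝ)..t, g x = G t :=
          intervalIntegral.integral_add_adjacent_intervals (hg.intervalIntegrable _ _)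
            (hg.intervalIntegrable _ _)
        have h2 : ∫ x in (3:ℝ)..t, g x = ∫ x in (3:ℝ)..t, q * x ^ (q - 1) := by
          apply intervalIntegral.integral_congr
          intro x hx
          rw [Set.uIcc_of_le h.le] at hx
          simp only [g, hχ1 x hx.1, mul_one]
        rw [h2, intervalIntegral.integral_const_mul,
          integral_rpow (Or.inl (by linarith)), sub_add_cancel,
          mul_div_cancel₀ _ (by linarith : q ≠ 0)] at h1
        linarith [hGn 3 (by norm_num)]
    have e1 : t ^ (2 * q) = (t ^ q) ^ 2 := by
      rw [mul_comm, Real.rpow_mul (by linarith)]; norm_num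
    have e2 : (3 : ℝ) ^ (2 * q) = (3 ^ q) ^ 2 := by
      rw [mul_comm, Real.rpow_mul (by norm_num)]; norm_num
    rw [e1, e2]
    have hx : 0 ≤ t ^ q := by positivity
    have hy : (0 : ℝ) ≤ 3 ^ q := by positivity
    generalize t ^ q = x at *
    generalize (3 : ℝ) ^ q = y at *
    have hG := hGn t ht
    generalize G t = z at *
    rw [sub_le_iff_le_add, ← sub_le_iff_le_add', le_div_iff₀ hε]
    by_cases hxy : x ≤ y
    · have h5 : x ^ 2 ≤ y ^ 2 := by gcongr
      have : (1 - ε) * x ^ 2 * ε ≤ x ^ 2 := by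
        have : (1 - ε) * ε ≤ 1 := by nlinarith
        nlinarith [sq_nonneg x]
      nlinarith [sq_nonneg z]
    · push Not at hxy
      have h6 : (x - y) ^ 2 ≤ z ^ 2 := by
        have : 0 ≤ x - y := by linarith
        gcongr
      have h7 : ((1 - ε) * x ^ 2 - z ^ 2) * ε ≤ ((1 - ε) * x ^ 2 - (x - y) ^ 2) * ε := by
        gcongr
      nlinarith [sq_nonneg (ε * x - y), sq_nonneg y]
  · intro t ht
    by_cases h : t ≤ 2
    · rw [hH0 t h]
      have : 0 < 2 * q - 1 := by linarith
      positivity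
    · push Not at h
      have hc2 : Continuous (fun x : ℝ => q ^ 2 * x ^ (2 * q - 2)) :=
        continuous_const.mul (continuous_id.rpow_const (fun _ => Or.inr (by linarith)))
      have h1 : H t ≤ ∫ x in (2:ℝ)..t, q ^ 2 * x ^ (2 * q - 2) := by
        apply intervalIntegral.integral_mono_on h.le (hg2.intervalIntegrable _ _)
          (hc2.intervalIntegrable _ _)
        intro x hx
        have hx0 : 0 < x := by linarith [hx.1]
        have : x ^ (2 * q - 2) = (x ^ (q - 1)) ^ 2 := by
          rw [show 2 * q - 2 = (q - 1) * 2 by ring, Real.rpow_mul hx0.le]; norm_num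
        rw [this]
        simp only [g]
        have h8 : χ x ^ 2 ≤ 1 := pow_le_one₀ (hχn x) (hχl x)
        calc (q * x ^ (q - 1) * χ x) ^ 2 = q ^ 2 * (x ^ (q - 1)) ^ 2 * χ x ^ 2 := by ring
          _ ≤ q ^ 2 * (x ^ (q - 1)) ^ 2 * 1 := by gcongr
          _ = _ := by ring
      rw [intervalIntegral.integral_const_mul, integral_rpow (Or.inl (by linarith)),
        show 2 * q - 2 + 1 = 2 * q - 1 by ring] at h1
      refine h1.trans ?_
      have h9 : (0 : ℝ) ≤ 2 ^ (2 * q - 1) := by positivity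
      have h10 : 0 < 2 * q - 1 := by linarith
      rw [div_mul_eq_mul_div, ← mul_div_assoc]
      gcongr
      linarith

lemma aux_integrableOn {N : ℕ} {Ω : Set (EuclideanSpace ℝ (Fin N))}
    (hΩb : Bornology.IsBounded Ω) {f : EuclideanSpace ℝ (Fin N) → ℝ}
    (hf : ContinuousOn f (closure Ω)) : IntegrableOn f Ω :=
  (hf.integrableOn_compact hΩb.isCompact_closure).mono_set subset_closure

/-- The estimate obtained by testing stability with (a cut-off of) `(w+1)^(s/2)`. -/
lemma aux_test {N : ℕ} {Ω : Set (EuclideanSpace ℝ (Fin N))} (hΩo : IsOpen Ω)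
    (hΩb : Bornology.IsBounded Ω)
    {w W f : EuclideanSpace ℝ (Fin N) → ℝ} {lam κ s ε : ℝ} (hlam : 0 < lam) (hκ : 0 < κ)
    (hs : 2 < s) (hε : 0 < ε) (hε1 : ε < 1)
    (hw : ContDiffOn ℝ 2 w Ω) (hwc : ContinuousOn w (closure Ω))
    (hwb : ∀ x ∈ frontier Ω, w x = 0) (hw0 : ∀ x ∈ closure Ω, 0 ≤ w x)
    (hWc : ContinuousOn W (closure Ω)) (hW0 : ∀ x ∈ closure Ω, 0 ≤ W x)
    (hfc : ContinuousOn f (closure Ω)) (hf0 : ∀ x ∈ closure Ω, 0 ≤ f x)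
    (heq : ∀ x ∈ Ω, -lap w x = lam * f x)
    (hst : ∀ φ : EuclideanSpace ℝ (Fin N) → ℝ, ContDiff ℝ 1 φ → HasCompactSupport φ →
      tsupport φ ⊆ Ω → lam * κ * ∫ x in Ω, W x * φ x ^ 2 ≤ ∫ x in Ω, ‖gradient φ x‖ ^ 2) :
    κ * ((1 - ε) * (∫ x in Ω, W x * (w x + 1) ^ s) - 3 ^ s / ε * ∫ x in Ω, W x) ≤
      s ^ 2 / (4 * (s - 1)) * ∫ x in Ω, f x * (w x + 1) ^ (s - 1) := by
  obtain ⟨g, G, H, hg, hG, hH, hG0, hH0, hGl, hHl⟩ := aux_cut (q := s / 2) (by linarith)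
  rw [show 2 * (s / 2) = s by ring] at hGl hHl
  obtain ⟨a1, a2, a3, a4⟩ := aux_energy hΩo hΩb hw hwc hwb hg hG hH hG0 hH0
  have h1 := hst _ a1 a2 a3
  rw [a4] at h1
  have hm : MeasurableSet Ω := hΩo.measurableSet
  have hw1 : ContinuousOn (fun x => w x + 1) (closure Ω) := hwc.add continuousOn_const
  have hwpow : ∀ r : ℝ, ContinuousOn (fun x => (w x + 1) ^ r) (closure Ω) := fun r =>
    hw1.rpow_const (fun x hx => Or.inl (by linarith [hw0 x hx]))
  have hGc : Continuous G := continuous_iff_continuousAt.2 fun t => (hG t).continuousAt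
  have hHc : Continuous H := continuous_iff_continuousAt.2 fun t => (hH t).continuousAt
  have hGw : ContinuousOn (fun x => G (w x + 1)) (closure Ω) := hGc.comp_continuousOn hw1
  have hHw : ContinuousOn (fun x => H (w x + 1)) (closure Ω) := hHc.comp_continuousOn hw1
  have e1 : ∫ x in Ω, W x * (Ω.indicator fun x => G (w x + 1)) x ^ 2 =
      ∫ x in Ω, W x * G (w x + 1) ^ 2 := by
    apply setIntegral_congr_fun hm
    intro x hx
    simp only [Set.indicator_of_mem hx]
  have e2 : ∫ x in Ω, H (w x + 1) * (-lap w x) = lam * ∫ x in Ω, H (w x + 1) * f x := by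
    rw [← integral_const_mul]
    apply setIntegral_congr_fun hm
    intro x hx
    simp only
    rw [heq x hx]; ring
  rw [e1, e2, mul_assoc] at h1
  have h2 := le_of_mul_le_mul_left h1 hlam
  have h3 : ∫ x in Ω, H (w x + 1) * f x ≤
      s ^ 2 / (4 * (s - 1)) * ∫ x in Ω, f x * (w x + 1) ^ (s - 1) := by
    rw [← integral_const_mul]
    have I1 : IntegrableOn (fun x => H (w x + 1) * f x) Ω := aux_integrableOn hΩb (hHw.mul hfc)
    have I2 : IntegrableOn (fun x => s ^ 2 / (4 * (s - 1)) * (f x * (w x + 1) ^ (s - 1))) Ω :=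
      aux_integrableOn hΩb (continuousOn_const.mul (hfc.mul (hwpow _)))
    apply setIntegral_mono_on I1 I2 hm
    intro x hx
    have h4 := hHl (w x + 1) (by linarith [hw0 x (subset_closure hx)])
    have h5 := mul_le_mul_of_nonneg_right h4 (hf0 x (subset_closure hx))
    refine h5.trans_eq ?_
    have : s - 1 ≠ 0 := by linarith
    field_simp
    ring
  have h4 : (1 - ε) * (∫ x in Ω, W x * (w x + 1) ^ s) - 3 ^ s / ε * ∫ x in Ω, W x ≤
      ∫ x in Ω, W x * G (w x + 1) ^ 2 := by
    have I1 : IntegrableOn (fun x => (1 - ε) * (W x * (w x + 1) ^ s)) Ω :=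
      aux_integrableOn hΩb (continuousOn_const.mul (hWc.mul (hwpow _)))
    have I2 : IntegrableOn (fun x => 3 ^ s / ε * W x) Ω :=
      aux_integrableOn hΩb (continuousOn_const.mul hWc)
    have I3 : IntegrableOn (fun x => W x * G (w x + 1) ^ 2) Ω :=
      aux_integrableOn hΩb (hWc.mul (hGw.pow 2))
    rw [← integral_const_mul, ← integral_const_mul, ← integral_sub I1 I2]
    apply setIntegral_mono_on (I1.sub I2) I3 hm
    intro x hx
    have h4 := hGl (w x + 1) (by linarith [hw0 x (subset_closure hx)]) ε hε hε1
    have h5 := mul_le_mul_of_nonneg_left h4 (hW0 x (subset_closure hx))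
    refine le_trans (le_of_eq ?_) h5
    simp only [Pi.sub_apply]
    ring
  exact ((mul_le_mul_of_nonneg_left h4 hκ.le).trans h2).trans h3

/-- The parameter condition coming from `L(s) < 0`. -/
lemma aux_param {p θ s r : ℝ} (hp : 1 < p) (hpθ : p ≤ θ) (hs : p + 1 < s)
    (hr : r = (θ + 1) / (p + 1) * s) (hL : Lpoly p θ s < 0) :
    s ^ 2 / (4 * (s - 1)) * (r ^ 2 / (4 * (r - 1))) < p * θ := by
  have hp1 : 0 < p + 1 := by linarith
  have hθ1 : 0 < θ + 1 := by linarith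
  have hrs : s ≤ r := by
    rw [hr]
    have : 1 ≤ (θ + 1) / (p + 1) := by rw [le_div_iff₀ hp1]; linarith
    nlinarith
  have hs1 : 0 < s - 1 := by linarith
  have hr1 : 0 < r - 1 := by linarith
  rw [div_mul_div_comm, div_lt_iff₀ (by positivity)]
  have key : Lpoly p θ s * ((θ + 1) / (p + 1)) ^ 2 =
      s ^ 2 * r ^ 2 - p * θ * (4 * (s - 1) * (4 * (r - 1))) := by
    rw [hr]; unfold Lpoly
    field_simp
    ring
  have : Lpoly p θ s * ((θ + 1) / (p + 1)) ^ 2 < 0 :=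
    mul_neg_of_neg_of_pos hL (by positivity)
  linarith

/-- Final absorption argument. -/
lemma aux_absorb {a ρ τ μ ε C₁ C₂ A Z D δ m : ℝ} (hρ : ρ < 1) (hμ : 0 < μ)
    (hε : ε = (1 - ρ) / 2) (ha : a = C₁ + C₂ / μ) (hapos : 0 < a)
    (hδ : δ = (1 - ρ) / (4 * a))
    (h1 : (1 - ε) * A - C₁ * D ≤ ρ * ((1 - τ) * A + τ * Z))
    (h2 : (1 - ε) * (μ * Z) - C₂ * D ≤ μ * ρ * (τ * A + (1 - τ) * Z))
    (h3 : D ≤ δ * (A + Z) + m) :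
    A + Z ≤ 4 * a * m / (1 - ρ) := by
  have h2' : (1 - ε) * Z - C₂ / μ * D ≤ ρ * (τ * A + (1 - τ) * Z) := by
    have : μ * ((1 - ε) * Z - C₂ / μ * D) ≤ μ * (ρ * (τ * A + (1 - τ) * Z)) := by
      have e : μ * ((1 - ε) * Z - C₂ / μ * D) = (1 - ε) * (μ * Z) - C₂ * D := by
        field_simp
      rw [e]; linarith
    exact le_of_mul_le_mul_left this hμ
  have h4 : (1 - ρ) / 2 * (A + Z) ≤ a * D := by
    rw [ha]
    rw [hε] at h1 h2'
    nlinarith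
  have h5 : a * D ≤ a * (δ * (A + Z) + m) := mul_le_mul_of_nonneg_left h3 hapos.le
  have h6 : a * δ = (1 - ρ) / 4 := by rw [hδ]; field_simp
  have h7 : a * (δ * (A + Z) + m) = (1 - ρ) / 4 * (A + Z) + a * m := by rw [← h6]; ring
  rw [le_div_iff₀ (by linarith)]
  nlinarith

/-- Weighted Young inequality in the form used. -/
lemma aux_young {U V e₁ e₂ b s r τ μ : ℝ} (hU : 0 < U) (hV : 0 < V) (hμ : 0 < μ)
    (hτ0 : 0 ≤ τ) (hτ1 : τ ≤ 1) (hb : 0 ≤ b) (h1 : e₁ = s * (1 - τ)) (h2 : e₂ = r * τ) :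
    b * (V ^ e₁ * U ^ e₂) ≤ μ ^ τ * (b * ((1 - τ) * V ^ s + τ * (U ^ r / μ))) := by
  have h := Real.geom_mean_le_arith_mean2_weighted (w₁ := 1 - τ) (w₂ := τ) (p₁ := V ^ s)
    (p₂ := U ^ r / μ) (by linarith) hτ0 (by positivity) (by positivity) (by ring)
  have e : μ ^ τ * ((V ^ s) ^ (1 - τ) * (U ^ r / μ) ^ τ) = V ^ e₁ * U ^ e₂ := by
    rw [Real.div_rpow (by positivity) hμ.le, ← Real.rpow_mul hV.le, ← Real.rpow_mul hU.le,
      ← h1, ← h2]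
    field_simp
  rw [← e]
  calc b * (μ ^ τ * ((V ^ s) ^ (1 - τ) * (U ^ r / μ) ^ τ))
      = μ ^ τ * (b * ((V ^ s) ^ (1 - τ) * (U ^ r / μ) ^ τ)) := by ring
    _ ≤ _ := by gcongr

set_option maxHeartbeats 4000000

/-- uniform integral estimates along the ray for `s > p+1` with `L(s) < 0`. -/
theorem stmt1 {N : ℕ} (hN : 1 ≤ N) (Ω : Set (EuclideanSpace ℝ (Fin N)))
    (hΩo : IsOpen Ω) (hΩb : Bornology.IsBounded Ω) (hΩs : HasSmoothBoundary Ω)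
    (p θ Λ σ s : ℝ) (hp : 1 < p) (hpθ : p ≤ θ) (hΛ : 0 < Λ) (hσ : 0 < σ)
    (hs : p + 1 < s) (hL : Lpoly p θ s < 0) :
    ∃ C : ℝ, ∀ lam ∈ Set.Ioo (Λ / 2) Λ, ∀ u v : EuclideanSpace ℝ (Fin N) → ℝ,
      ContDiffOn ℝ 2 u Ω → ContDiffOn ℝ 2 v Ω →
      ContinuousOn u (closure Ω) → ContinuousOn v (closure Ω) →
      (∀ x ∈ Ω, 0 < u x) → (∀ x ∈ Ω, 0 < v x) →
      (∀ x ∈ frontier Ω, u x = 0) → (∀ x ∈ frontier Ω, v x = 0) →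
      (∀ x ∈ Ω, -lap u x = lam * (v x + 1) ^ p) →
      (∀ x ∈ Ω, -lap v x = σ * lam * (u x + 1) ^ θ) →
      IsStable Ω lam (σ * lam) p θ u v →
      (∫ x in Ω, (u x + 1) ^ ((θ - 1) / 2) * (v x + 1) ^ ((p + 2 * s - 1) / 2)) +
          (∫ x in Ω, (u x + 1) ^ (θ + (θ + 1) * (s - 1) / (p + 1))) ≤ C := by
  have hp1 : 0 < p + 1 := by linarith
  have hθ1 : 0 < θ + 1 := by linarith
  have hθ : 1 < θ := by linarith
  set α := (θ + 1) / (p + 1) with hαdef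
  have hα : 1 ≤ α := by rw [hαdef, le_div_iff₀ hp1]; linarith
  have hαp : α * (p + 1) = θ + 1 := by rw [hαdef]; field_simp
  set r := α * s with hr
  have hs2 : 2 < s := by linarith
  have hrs : s ≤ r := by rw [hr]; nlinarith
  have hr2 : 2 < r := by linarith
  have hpar := aux_param hp hpθ hs hr hL
  set m₁ := s ^ 2 / (4 * (s - 1)) with hm₁
  set m₂ := r ^ 2 / (4 * (r - 1)) with hm₂
  have hm₁p : 0 < m₁ := by
    have : 0 < s - 1 := by linarith
    positivity
  have hm₂p : 0 < m₂ := by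
    have : 0 < r - 1 := by linarith
    positivity
  set κ := Real.sqrt (σ * p * θ) with hκdef
  have hσpθ : 0 < σ * p * θ := by positivity
  have hκ : 0 < κ := Real.sqrt_pos.2 hσpθ
  have hκ2 : κ * κ = σ * p * θ := Real.mul_self_sqrt hσpθ.le
  set a := σ * m₁ / κ with ha
  set b := m₂ / κ with hb
  have hap : 0 < a := by positivity
  have hbp : 0 < b := by positivity
  set ν := Real.sqrt (b / a) with hν
  have hνp : 0 < ν := Real.sqrt_pos.2 (by positivity)
  have hν2 : ν * ν = b / a := Real.mul_self_sqrt (by positivity)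
  set ρ := a * ν with hρ
  have hρp : 0 < ρ := by positivity
  have hρν : ρ * ν = b := by
    rw [hρ, mul_assoc, hν2]; field_simp
  have hρ1 : ρ < 1 := by
    have h1 : ρ ^ 2 < 1 := by
      have : ρ ^ 2 = m₁ * m₂ / (p * θ) := by
        have e1 : ρ ^ 2 = a * b := by
          rw [hρ, mul_pow, pow_two ν, hν2]; field_simp
        rw [e1, ha, hb, div_mul_div_comm, hκ2]
        field_simp
      rw [this, div_lt_one (by positivity)]
      exact hpar
    exact (sq_lt_one_iff₀ hρp.le).1 h1
  set τ := (p + 1) / (2 * s) with hτ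
  have hτp : 0 < τ := by have : 0 < s := by linarith
                         positivity
  have hτ1 : τ ≤ 1 := by rw [hτ, div_le_one (by linarith)]; linarith
  have hsτ : s * τ = (p + 1) / 2 := by
    have : s ≠ 0 := by linarith
    rw [hτ]; field_simp
  have hrτ : r * τ = (θ + 1) / 2 := by
    rw [hr, mul_assoc, hsτ, ← hαp]; ring
  set μ := ν ^ (1 / τ) with hμ
  have hμp : 0 < μ := by positivity
  have hμτ : μ ^ τ = ν := by
    rw [hμ, ← Real.rpow_mul hνp.le, one_div, inv_mul_cancel₀ hτp.ne', Real.rpow_one]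
  have hμτ' : μ ^ (1 - τ) = μ / ν := by
    rw [Real.rpow_sub hμp, Real.rpow_one, hμτ]
  set c := (σ / α) ^ (1 / (p + 1)) with hc
  have hcp : 0 < c := by positivity
  have hcσ : c ^ (p + 1) * α = σ := by
    rw [hc, ← Real.rpow_mul (by positivity), one_div, inv_mul_cancel₀ hp1.ne', Real.rpow_one]
    field_simp
  set ε := (1 - ρ) / 2 with hε
  have hεp : 0 < ε := by rw [hε]; linarith
  have hε1 : ε < 1 := by rw [hε]; linarith
  set C₁ : ℝ := 3 ^ s / ε with hC₁
  set C₂ : ℝ := 3 ^ r / ε with hC₂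
  have hC₁p : 0 < C₁ := by positivity
  have hC₂p : 0 < C₂ := by positivity
  set a' := C₁ + C₂ / μ with ha'
  have ha'p : 0 < a' := by positivity
  set δ := (1 - ρ) / (4 * a') with hδ
  have hδp : 0 < δ := by
    have : 0 < 1 - ρ := by linarith
    positivity
  set vol := (volume : Measure (EuclideanSpace ℝ (Fin N))).real Ω with hvol
  set m := μ / δ ^ 2 * vol with hm
  set M := 4 * a' * m / (1 - ρ) with hM
  set T := ((1 + c) / c) ^ ((p - 1) / 2) with hT
  have hTp : 0 < T := by positivity
  refine ⟨M + T * (μ * M), ?_⟩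
  intro lam hlam u v hu hv huc hvc hupos hvpos hub hvb hule hvle hstab
  have hlp : 0 < lam := by linarith [hlam.1]
  have hclos : ∀ {w : EuclideanSpace ℝ (Fin N) → ℝ}, (∀ x ∈ Ω, 0 < w x) →
      (∀ x ∈ frontier Ω, w x = 0) → ∀ x ∈ closure Ω, 0 ≤ w x := by
    intro w h1 h2 x hx
    by_cases hxΩ : x ∈ Ω
    · exact (h1 x hxΩ).le
    · exact (h2 x (by rw [hΩo.frontier_eq]; exact ⟨hx, hxΩ⟩)).ge
  have hu0 := hclos hupos hub
  have hv0 := hclos hvpos hvb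
  have hmeas : MeasurableSet Ω := hΩo.measurableSet
  have hfin : volume Ω < ⊤ := hΩb.measure_lt_top
  have hcomp := aux_comparison hΩo hΩb hp hpθ hlp hcp hcσ hu hv huc hvc hu0 hv0 hub hvb hule hvle
  have hUp : ∀ q : ℝ, ContinuousOn (fun x => (u x + 1) ^ q) (closure Ω) := fun q =>
    (huc.add continuousOn_const).rpow_const (fun x hx => Or.inl (by
      have := hu0 x hx
      simp only [Pi.add_apply]
      linarith))
  have hVp : ∀ q : ℝ, ContinuousOn (fun x => (v x + 1) ^ q) (closure Ω) := fun q =>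
    (hvc.add continuousOn_const).rpow_const (fun x hx => Or.inl (by
      have := hv0 x hx
      simp only [Pi.add_apply]
      linarith))
  let W : EuclideanSpace ℝ (Fin N) → ℝ := fun x =>
    (v x + 1) ^ ((p - 1) / 2) * (u x + 1) ^ ((θ - 1) / 2)
  have hWc : ContinuousOn W (closure Ω) := (hVp _).mul (hUp _)
  have hW0 : ∀ x ∈ closure Ω, 0 ≤ W x := by
    intro x hx
    have h1 : 0 ≤ u x + 1 := by linarith [hu0 x hx]
    have h2 : 0 ≤ v x + 1 := by linarith [hv0 x hx]
    exact mul_nonneg (Real.rpow_nonneg h2 _) (Real.rpow_nonneg h1 _)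
  have hst : ∀ φ : EuclideanSpace ℝ (Fin N) → ℝ, ContDiff ℝ 1 φ → HasCompactSupport φ →
      tsupport φ ⊆ Ω → lam * κ * ∫ x in Ω, W x * φ x ^ 2 ≤ ∫ x in Ω, ‖gradient φ x‖ ^ 2 := by
    intro φ h1 h2 h3
    have h4 := aux_stable_C1 hΩo hΩb hstab (aux_integrableOn hΩb hWc) h1 h2 h3
    have h5 : Real.sqrt (lam * (σ * lam) * p * θ) = lam * κ := by
      rw [show lam * (σ * lam) * p * θ = lam ^ 2 * (σ * p * θ) by ring,
        Real.sqrt_mul (by positivity), Real.sqrt_sq hlp.le]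
    rw [h5] at h4
    exact h4
  have t1 := aux_test (f := fun x => σ * (u x + 1) ^ θ) hΩo hΩb hlp hκ hs2 hεp hε1 hv hvc hvb hv0
    hWc hW0 (continuousOn_const.mul (hUp θ))
    (fun x hx => by
      have : 0 ≤ u x + 1 := by linarith [hu0 x hx]
      positivity)
    (fun x hx => by rw [hvle x hx]; ring) hst
  have t2 := aux_test (f := fun x => (v x + 1) ^ p) hΩo hΩb hlp hκ hr2 hεp hε1 hu huc hub hu0
    hWc hW0 (hVp p)
    (fun x hx => by
      have : 0 ≤ v x + 1 := by linarith [hv0 x hx]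
      positivity)
    (fun x hx => hule x hx) hst
  set A := ∫ x in Ω, W x * (v x + 1) ^ s with hA
  set Y := ∫ x in Ω, W x * (u x + 1) ^ r with hY
  set D := ∫ x in Ω, W x with hD
  set Z := Y / μ with hZ
  have hYZ : Y = μ * Z := by rw [hZ]; field_simp
  have IA : IntegrableOn (fun x => W x * (v x + 1) ^ s) Ω := aux_integrableOn hΩb (hWc.mul (hVp s))
  have IY : IntegrableOn (fun x => W x * (u x + 1) ^ r) Ω := aux_integrableOn hΩb (hWc.mul (hUp r))
  have ID : IntegrableOn W Ω := aux_integrableOn hΩb hWc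
  have IF1 : IntegrableOn (fun x => σ * (u x + 1) ^ θ * (v x + 1) ^ (s - 1)) Ω :=
    aux_integrableOn hΩb ((continuousOn_const.mul (hUp θ)).mul (hVp _))
  have IF2 : IntegrableOn (fun x => (v x + 1) ^ p * (u x + 1) ^ (r - 1)) Ω :=
    aux_integrableOn hΩb ((hVp p).mul (hUp _))
  have hlin : ∀ k₁ k₂ : ℝ,
      (∫ x in Ω, (k₁ * (W x * (v x + 1) ^ s) + k₂ * (W x * (u x + 1) ^ r))) =
        k₁ * A + k₂ * Y := by
    intro k₁ k₂
    rw [integral_add (IA.const_mul k₁) (IY.const_mul k₂), integral_const_mul, integral_const_mul]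
  have Ilin : ∀ k₁ k₂ : ℝ, IntegrableOn
      (fun x => k₁ * (W x * (v x + 1) ^ s) + k₂ * (W x * (u x + 1) ^ r)) Ω := fun k₁ k₂ =>
    (IA.const_mul k₁).add (IY.const_mul k₂)
  have hF1 : ∫ x in Ω, σ * (u x + 1) ^ θ * (v x + 1) ^ (s - 1) ≤
      σ * ν * (1 - τ) * A + σ * ν * τ / μ * Y := by
    rw [← hlin]
    apply setIntegral_mono_on IF1 (Ilin _ _) hmeas
    intro x hx
    have hU : 0 < u x + 1 := by linarith [hupos x hx]
    have hV : 0 < v x + 1 := by linarith [hvpos x hx]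
    have h := aux_young (U := u x + 1) (V := v x + 1) (b := W x) (s := s) (r := r) (μ := μ)
      (e₁ := s - (p + 1) / 2) (e₂ := (θ + 1) / 2) hU hV hμp hτp.le hτ1
      (hW0 x (subset_closure hx)) (by rw [mul_sub, hsτ]; ring) hrτ.symm
    have e : W x * ((v x + 1) ^ (s - (p + 1) / 2) * (u x + 1) ^ ((θ + 1) / 2)) =
        (u x + 1) ^ θ * (v x + 1) ^ (s - 1) := by
      have e1 : (u x + 1) ^ θ = (u x + 1) ^ ((θ - 1) / 2) * (u x + 1) ^ ((θ + 1) / 2) := by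
        rw [← Real.rpow_add hU]; congr 1; ring
      have e2 : (v x + 1) ^ (s - 1) =
          (v x + 1) ^ ((p - 1) / 2) * (v x + 1) ^ (s - (p + 1) / 2) := by
        rw [← Real.rpow_add hV]; congr 1; ring
      rw [e1, e2]; simp only [W]; ring
    rw [e, hμτ] at h
    have h' := mul_le_mul_of_nonneg_left h hσ.le
    calc _ = σ * ((u x + 1) ^ θ * (v x + 1) ^ (s - 1)) := by ring
      _ ≤ _ := h'
      _ = _ := by ring
  have hF2 : ∫ x in Ω, (v x + 1) ^ p * (u x + 1) ^ (r - 1) ≤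
      μ / ν * τ * A + μ / ν * (1 - τ) / μ * Y := by
    rw [← hlin]
    apply setIntegral_mono_on IF2 (Ilin _ _) hmeas
    intro x hx
    have hU : 0 < u x + 1 := by linarith [hupos x hx]
    have hV : 0 < v x + 1 := by linarith [hvpos x hx]
    have h := aux_young (U := u x + 1) (V := v x + 1) (b := W x) (s := s) (r := r) (μ := μ)
      (τ := 1 - τ)
      (e₁ := (p + 1) / 2) (e₂ := r - (θ + 1) / 2) hU hV hμp (by linarith) (by linarith)
      (hW0 x (subset_closure hx)) (by rw [sub_sub_cancel, hsτ]) (by rw [mul_sub, hrτ]; ring)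
    have e : W x * ((v x + 1) ^ ((p + 1) / 2) * (u x + 1) ^ (r - (θ + 1) / 2)) =
        (v x + 1) ^ p * (u x + 1) ^ (r - 1) := by
      have e1 : (u x + 1) ^ (r - 1) =
          (u x + 1) ^ ((θ - 1) / 2) * (u x + 1) ^ (r - (θ + 1) / 2) := by
        rw [← Real.rpow_add hU]; congr 1; ring
      have e2 : (v x + 1) ^ p =
          (v x + 1) ^ ((p - 1) / 2) * (v x + 1) ^ ((p + 1) / 2) := by
        rw [← Real.rpow_add hV]; congr 1; ring
      rw [e1, e2]; simp only [W]; ring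
    rw [e, hμτ', sub_sub_cancel] at h
    calc _ ≤ _ := h
      _ = _ := by ring
  have g1 : (1 - ε) * A - C₁ * D ≤ ρ * ((1 - τ) * A + τ * Z) := by
    have h1 := t1.trans (mul_le_mul_of_nonneg_left hF1 hm₁p.le)
    have h2 : m₁ * (σ * ν * (1 - τ) * A + σ * ν * τ / μ * Y) =
        κ * (ρ * ((1 - τ) * A + τ * Z)) := by
      rw [hρ, ha, hYZ]; field_simp
    rw [h2] at h1
    exact le_of_mul_le_mul_left h1 hκ
  have g2 : (1 - ε) * (μ * Z) - C₂ * D ≤ μ * ρ * (τ * A + (1 - τ) * Z) := by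
    have h1 := t2.trans (mul_le_mul_of_nonneg_left hF2 hm₂p.le)
    have h2 : m₂ * (μ / ν * τ * A + μ / ν * (1 - τ) / μ * Y) =
        κ * (μ * ρ * (τ * A + (1 - τ) * Z)) := by
      have h3 : m₂ = κ * (ρ * ν) := by rw [hρν, hb]; field_simp
      rw [h3, hYZ]; field_simp
    rw [h2] at h1
    have h4 := le_of_mul_le_mul_left h1 hκ
    rwa [hYZ] at h4
  have g3 : D ≤ δ * (A + Z) + m := by
    have h1 : D ≤ ∫ x in Ω, ((δ * (W x * (v x + 1) ^ s) + δ / μ * (W x * (u x + 1) ^ r))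
        + μ / δ ^ 2) := by
      have I4 : IntegrableOn (fun x => (δ * (W x * (v x + 1) ^ s)
          + δ / μ * (W x * (u x + 1) ^ r)) + μ / δ ^ 2) Ω :=
        (Ilin _ _).add (integrableOn_const hfin.ne)
      apply setIntegral_mono_on ID I4 hmeas
      intro x hx
      have hU : 1 ≤ u x + 1 := by linarith [hupos x hx]
      have hV : 1 ≤ v x + 1 := by linarith [hvpos x hx]
      have hWx := hW0 x (subset_closure hx)
      set X := (v x + 1) ^ s with hX
      set Q := (u x + 1) ^ r with hQ
      have hXp : 0 < X := by positivity
      have hQp : 0 < Q := by positivity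
      have hsplit : δ * (W x * X) + δ / μ * (W x * Q) = W x * (δ * (X + Q / μ)) := by
        field_simp
      change W x ≤ δ * (W x * X) + δ / μ * (W x * Q) + μ / δ ^ 2
      rw [hsplit]
      by_cases hbig : 1 ≤ δ * (X + Q / μ)
      · have : W x * 1 ≤ W x * (δ * (X + Q / μ)) := mul_le_mul_of_nonneg_left hbig hWx
        have h5 : 0 < μ / δ ^ 2 := by positivity
        linarith
      · push Not at hbig
        have hQμ : 0 < Q / μ := by positivity
        have hX1 : X ≤ 1 / δ := by
          rw [le_div_iff₀ hδp]
          have hk := mul_pos hδp hQμ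
          rw [mul_add] at hbig
          rw [mul_comm]
          linarith only [hk, hbig]
        have hQ1 : Q ≤ μ / δ := by
          have : Q / μ ≤ 1 / δ := by
            rw [le_div_iff₀ hδp]
            have hk := mul_pos hδp hXp
            rw [mul_add] at hbig
            rw [mul_comm]
            linarith only [hk, hbig]
          rw [div_le_iff₀ hμp] at this
          calc Q ≤ 1 / δ * μ := this
            _ = μ / δ := by ring
        have hWle : W x ≤ X * Q := by
          apply mul_le_mul
          · exact Real.rpow_le_rpow_of_exponent_le hV (by linarith)
          · apply Real.rpow_le_rpow_of_exponent_le hU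
            have : θ + 1 ≤ r := by 
              rw [hr, ← hαp]; exact mul_le_mul_of_nonneg_left hs.le (by positivity)
            linarith
          · positivity
          · positivity
        have h6 : X * Q ≤ 1 / δ * (μ / δ) := by gcongr
        have h7 : 1 / δ * (μ / δ) = μ / δ ^ 2 := by field_simp
        have h8 : 0 ≤ W x * (δ * (X + Q / μ)) := by positivity
        linarith
    rw [integral_add (Ilin _ _) (integrableOn_const hfin.ne), hlin, setIntegral_const] at h1
    refine h1.trans_eq ?_
    rw [hYZ, hm, hvol, smul_eq_mul]
    field_simp
  have hAZ := aux_absorb hρ1 hμp hε ha' ha'p hδ g1 g2 g3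
  have hA0 : 0 ≤ A := by
    apply setIntegral_nonneg hmeas
    intro x hx
    have : 0 < v x + 1 := by linarith [hvpos x hx]
    have := hW0 x (subset_closure hx)
    positivity
  have hY0 : 0 ≤ Y := by
    apply setIntegral_nonneg hmeas
    intro x hx
    have : 0 < u x + 1 := by linarith [hupos x hx]
    have := hW0 x (subset_closure hx)
    positivity
  have hZ0 : 0 ≤ Z := by positivity
  have f1 : (∫ x in Ω, (u x + 1) ^ ((θ - 1) / 2) * (v x + 1) ^ ((p + 2 * s - 1) / 2)) = A := by
    apply setIntegral_congr_fun hmeas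
    intro x hx
    have hV : 0 < v x + 1 := by linarith [hvpos x hx]
    have e2 : (v x + 1) ^ ((p + 2 * s - 1) / 2) =
        (v x + 1) ^ ((p - 1) / 2) * (v x + 1) ^ s := by
      rw [← Real.rpow_add hV]; congr 1; ring
    simp only [W]
    rw [e2]; ring
  have f2 : (∫ x in Ω, (u x + 1) ^ (θ + (θ + 1) * (s - 1) / (p + 1))) ≤ T * Y := by
    rw [← integral_const_mul]
    apply setIntegral_mono_on (aux_integrableOn hΩb (hUp _)) (IY.const_mul T) hmeas
    intro x hx
    have hU : 0 < u x + 1 := by linarith [hupos x hx]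
    have hV : 1 ≤ v x + 1 := by linarith [hvpos x hx]
    have h1 : (u x + 1) ^ α ≤ (1 + c) / c * (v x + 1) := by
      rw [div_mul_eq_mul_div, le_div_iff₀ hcp]
      have h9 := hcomp x hx
      have h10 := mul_pos hcp (hvpos x hx)
      have h11 := hvpos x hx
      linarith only [h9, h10, h11, hcp]
    have h2 : ((u x + 1) ^ α) ^ ((p - 1) / 2) ≤ ((1 + c) / c * (v x + 1)) ^ ((p - 1) / 2) :=
      Real.rpow_le_rpow (by positivity) h1 (by linarith)
    rw [Real.mul_rpow (by positivity) (by linarith), ← hT, ← Real.rpow_mul hU.le] at h2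
    have e : (u x + 1) ^ (θ + (θ + 1) * (s - 1) / (p + 1)) =
        (u x + 1) ^ (α * ((p - 1) / 2)) * ((u x + 1) ^ ((θ - 1) / 2) * (u x + 1) ^ r) := by
      rw [← Real.rpow_add hU, ← Real.rpow_add hU]
      congr 1
      rw [hr, hαdef]
      field_simp
      ring
    rw [e]
    calc _ ≤ T * (v x + 1) ^ ((p - 1) / 2) * ((u x + 1) ^ ((θ - 1) / 2) * (u x + 1) ^ r) := by
          gcongr
      _ = _ := by simp only [W]; ring
  rw [f1]
  have hZM : Z ≤ M := by linarith
  have : T * Y ≤ T * (μ * M) := by rw [hYZ]; gcongr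
  linarith
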